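/- Let p, q be coprime positive integers and k a squarefree positive integer with k ∉ {1, 2, 3, 6}, and let W be the elliptic curve over ℚ with affine equation y² = x·(x + p·k)·(x − q·k). Then every torsion point of W(ℚ) is 2-torsion: for every rational point P of W, if n·P = O for some positive integer n, then 2·P = O. -/

import Mathlib

open WeierstrassCurve

/-!
The idea is to work at a prime `r ≠ 3` dividing `k`, where the curve has additive reduction with the
cusp at the origin. If `2 P = (x, y)`, then `x`, `x + p k` and `x - q k` are squares; as `r` divides
`p k` or `q k` exactly once, this rules out `r ∣ x`, so `2 P` reduces to a nonsingular point.

Put `X = x + s` with `s` a third of the `x²`-coefficient. This yields `y² = X³ + A X + B` with `A`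
and `B` divisible by `r²`, which is close to `y² = X³`, whose nonsingular points form a group with
additive parameter `X / y`. Correspondingly, on points with nonsingular reduction `X / y` is
additive up to a relative error divisible by `r²`. If `n • 2 P = O` and `2 P ≠ O`, it follows that
`r²` divides `n`. Hence the order of `2 P` has no prime factor, since a multiple of `2 P` of prime
order is again the double of a point.
-/

section LineSection

variable {F : Type*} [Field F]

/-- The points `(X₁, y₁)`, `(X₂, y₂)`, `(X₃, y₃)` are, with multiplicity, the intersection of the
line `y = L x + c` with the cubic `y² = x³ + A x + B`: the first three fields compare coefficients
in `x³ + A x + B - (L x + c)² = (x - X₁) (x - X₂) (x - X₃)`. -/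
structure IsLineSection (A B L c X₁ y₁ X₂ y₂ X₃ y₃ : F) : Prop where
  sum_X : X₁ + X₂ + X₃ = L ^ 2
  sum_mul_X : X₁ * X₂ + X₁ * X₃ + X₂ * X₃ = A - 2 * L * c
  prod_X : X₁ * X₂ * X₃ = c ^ 2 - B
  y₁_eq : y₁ = L * X₁ + c
  y₂_eq : y₂ = L * X₂ + c
  y₃_eq : y₃ = L * X₃ + c

namespace IsLineSection

variable {A B L c X₁ y₁ X₂ y₂ X₃ y₃ : F}

lemma prod_y (h : IsLineSection A B L c X₁ y₁ X₂ y₂ X₃ y₃) (hc : c ≠ 0) :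
    y₁ * y₂ * y₃ = c ^ 3 * (1 + (A * (L / c) ^ 2 - B * (L / c) ^ 3)) := by
  rw [h.y₁_eq, h.y₂_eq, h.y₃_eq]
  field_simp
  linear_combination L ^ 3 * h.prod_X + L ^ 2 * c * h.sum_mul_X + L * c ^ 2 * h.sum_X

lemma sum_X_div_y (h : IsLineSection A B L c X₁ y₁ X₂ y₂ X₃ y₃) (hc : c ≠ 0) (hy₁ : y₁ ≠ 0)
    (hy₂ : y₂ ≠ 0) (hy₃ : y₃ ≠ 0) :
    X₁ / y₁ + X₂ / y₂ + X₃ / y₃ =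
      (2 * (A * (L / c)) - 3 * (B * (L / c) ^ 2)) * c⁻¹ /
        (1 + (A * (L / c) ^ 2 - B * (L / c) ^ 3)) := by
  have hnum : X₁ * y₂ * y₃ + X₂ * y₁ * y₃ + X₃ * y₁ * y₂ =
      c ^ 2 * (2 * (A * (L / c)) - 3 * (B * (L / c) ^ 2)) := by
    rw [h.y₁_eq, h.y₂_eq, h.y₃_eq]
    field_simp
    linear_combination 3 * L ^ 2 * h.prod_X + 2 * L * c * h.sum_mul_X + c ^ 2 * h.sum_X
  calc X₁ / y₁ + X₂ / y₂ + X₃ / y₃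
      = (X₁ * y₂ * y₃ + X₂ * y₁ * y₃ + X₃ * y₁ * y₂) / (y₁ * y₂ * y₃) := by field_simp
    _ = _ := by
      rw [hnum, h.prod_y hc, pow_succ' c 2, mul_assoc, ← mul_div_mul_left _ _ (pow_ne_zero 2 hc)]
      field_simp

/-- In the coordinates `z = X / y`, `w = 1 / y` the cubic becomes `w = z³ + A z w² + B w³`.
Subtracting two instances and dividing by `z₁ - z₂` yields the slope `-L / c` of the line, in a form
which remains valid for tangents. -/
lemma L_mul_eq (h : IsLineSection A B L c X₁ y₁ X₂ y₂ X₃ y₃) (hy₁ : y₁ ≠ 0) (hy₂ : y₂ ≠ 0) :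
    L * (1 - (A * (X₂ / y₂ * (y₁⁻¹ + y₂⁻¹)) + B * (y₁⁻¹ ^ 2 + y₁⁻¹ * y₂⁻¹ + y₂⁻¹ ^ 2))) =
      -c * ((X₁ / y₁) ^ 2 + X₁ / y₁ * (X₂ / y₂) + (X₂ / y₂) ^ 2 + A * y₁⁻¹ ^ 2) := by
  have hX₃ : X₃ = L ^ 2 - X₁ - X₂ := by linear_combination h.sum_X
  have hA : A = X₁ * X₂ + X₁ * X₃ + X₂ * X₃ + 2 * L * c := by linear_combination -h.sum_mul_X
  have hB : B = c ^ 2 - X₁ * X₂ * X₃ := by linear_combination h.prod_X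
  field_simp
  rw [hA, hB, hX₃, h.y₁_eq, h.y₂_eq]
  ring

end IsLineSection

end LineSection

section Valuation

variable {F Γ₀ : Type*} [Field F] [LinearOrderedCommGroupWithZero Γ₀] {v : Valuation F Γ₀}

lemma valuation_mul_le {a b : F} {s t : Γ₀} (ha : v a ≤ s) (hb : v b ≤ t) : v (a * b) ≤ s * t :=
  (v.map_mul a b).trans_le (mul_le_mul' ha hb)

lemma valuation_mul_le_of_le_one {a b : F} {s : Γ₀} (ha : v a ≤ s) (hb : v b ≤ 1) :
    v (a * b) ≤ s :=
  (valuation_mul_le ha hb).trans_eq (mul_one s)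

lemma valuation_pow_le {a : F} {t : Γ₀} (ha : v a ≤ t) (n : ℕ) : v (a ^ n) ≤ t ^ n :=
  (v.map_pow a n).trans_le (pow_le_pow_left' ha n)

lemma valuation_natCast_mul_le {a : F} {t : Γ₀} (ha : v a ≤ t) (n : ℕ) : v (n * a) ≤ t :=
  (valuation_mul_le (natCast_mem v.integer n) ha).trans_eq (one_mul t)

/-- `(X, y)` lies in the neighbourhood `v (X / y) ≤ ρ`, `v (1 / y) ≤ ρ ^ 3` of the point at infinity
of a short Weierstrass curve. -/
structure IsNearInfinity (v : Valuation F Γ₀) (ρ : Γ₀) (X y : F) : Prop where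
  ne_zero : y ≠ 0
  div_le : v (X / y) ≤ ρ
  inv_le : v y⁻¹ ≤ ρ ^ 3

lemma IsNearInfinity.neg {ρ : Γ₀} {X y : F} (h : IsNearInfinity v ρ X y) :
    IsNearInfinity v ρ X (-y) where
  ne_zero := neg_ne_zero.2 h.ne_zero
  div_le := by rw [div_neg, v.map_neg]; exact h.div_le
  inv_le := by rw [inv_neg, v.map_neg]; exact h.inv_le

namespace IsLineSection

variable {ρ : Γ₀} {A B L c X₁ y₁ X₂ y₂ X₃ y₃ : F}

lemma intercept_ne_zero_and_valuation_div_le (h : IsLineSection A B L c X₁ y₁ X₂ y₂ X₃ y₃)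
    (hA : v A < 1) (hB : v B < 1) (hρ : ρ ≤ 1) (h₁ : IsNearInfinity v ρ X₁ y₁)
    (h₂ : IsNearInfinity v ρ X₂ y₂) :
    c ≠ 0 ∧ v (L / c) ≤ ρ ^ 2 := by
  have key := h.L_mul_eq h₁.ne_zero h₂.ne_zero
  set δ := A * (X₂ / y₂ * (y₁⁻¹ + y₂⁻¹)) + B * (y₁⁻¹ ^ 2 + y₁⁻¹ * y₂⁻¹ + y₂⁻¹ ^ 2)
  have hρ3 : ρ ^ 3 ≤ 1 := pow_le_one' hρ 3
  have hz₂ : X₂ / y₂ ∈ v.integer := h₂.div_le.trans hρ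
  have hw₁ : y₁⁻¹ ∈ v.integer := h₁.inv_le.trans hρ3
  have hw₂ : y₂⁻¹ ∈ v.integer := h₂.inv_le.trans hρ3
  have hδ : v (1 - δ) = 1 := by
    refine v.map_one_sub_of_lt (v.map_add_lt ?_ ?_) <;> rw [v.map_mul]
    · exact mul_lt_one_of_lt_of_le hA (mul_mem hz₂ (add_mem hw₁ hw₂))
    · exact mul_lt_one_of_lt_of_le hB
        (add_mem (add_mem (pow_mem hw₁ 2) (mul_mem hw₁ hw₂)) (pow_mem hw₂ 2))
  have hc : c ≠ 0 := by
    rintro rfl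
    have hδ0 : 1 - δ ≠ 0 := fun h0 ↦ by simp [h0] at hδ
    have hL : L = 0 := by simpa [hδ0] using key
    exact h₁.ne_zero (by simp [h.y₁_eq, hL])
  refine ⟨hc, ?_⟩
  have hLc : L / c * (1 - δ) =
      -((X₁ / y₁) ^ 2 + X₁ / y₁ * (X₂ / y₂) + (X₂ / y₂) ^ 2 + A * y₁⁻¹ ^ 2) := by
    rw [div_mul_eq_mul_div, key]
    field_simp
  calc v (L / c) = v (L / c * (1 - δ)) := by rw [v.map_mul, hδ, mul_one]
    _ ≤ ρ ^ 2 := by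
      rw [hLc, v.map_neg]
      refine v.map_add_le (v.map_add_le (v.map_add_le (valuation_pow_le h₁.div_le 2) ?_)
        (valuation_pow_le h₂.div_le 2)) ?_
      · exact (valuation_mul_le h₁.div_le h₂.div_le).trans_eq (sq ρ).symm
      · calc v (A * y₁⁻¹ ^ 2) ≤ 1 * (ρ ^ 3) ^ 2 :=
              valuation_mul_le hA.le (valuation_pow_le h₁.inv_le 2)
          _ = ρ ^ 6 := by rw [one_mul, ← pow_mul]
          _ ≤ ρ ^ 2 := pow_le_pow_right_of_le_one' hρ (by norm_num)

lemma valuation_inv_intercept_le (h : IsLineSection A B L c X₁ y₁ X₂ y₂ X₃ y₃)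
    (h₁ : IsNearInfinity v ρ X₁ y₁) (hc : c ≠ 0) (hL : v (L / c) ≤ ρ ^ 2) : v c⁻¹ ≤ ρ ^ 3 := by
  have hy₁ := h₁.ne_zero
  have hcw : c⁻¹ = y₁⁻¹ + L / c * (X₁ / y₁) := by
    field_simp
    exact h.y₁_eq.trans (add_comm _ _)
  rw [hcw]
  exact v.map_add_le h₁.inv_le ((valuation_mul_le hL h₁.div_le).trans_eq (pow_succ ρ 2).symm)

lemma isNearInfinity_and_valuation_sum_le {α : Γ₀} (h : IsLineSection A B L c X₁ y₁ X₂ y₂ X₃ y₃)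
    (hα : α < 1) (hA : v A ≤ α) (hB : v B ≤ α) (hρ : ρ ≤ 1) (h₁ : IsNearInfinity v ρ X₁ y₁)
    (h₂ : IsNearInfinity v ρ X₂ y₂) :
    IsNearInfinity v ρ X₃ y₃ ∧ v (X₁ / y₁ + X₂ / y₂ + X₃ / y₃) ≤ α * ρ := by
  obtain ⟨hc, hL⟩ :=
    h.intercept_ne_zero_and_valuation_div_le (hA.trans_lt hα) (hB.trans_lt hα) hρ h₁ h₂
  have hν := h.valuation_inv_intercept_le h₁ hc hL
  have hL1 : L / c ∈ v.integer := hL.trans (pow_le_one' hρ 2)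
  have hD : v (1 + (A * (L / c) ^ 2 - B * (L / c) ^ 3)) = 1 :=
    v.map_one_add_of_lt <| (v.map_sub_le (valuation_mul_le_of_le_one hA (pow_mem hL1 2))
      (valuation_mul_le_of_le_one hB (pow_mem hL1 3))).trans_lt hα
  have hy₃ : y₃ ≠ 0 := by
    rintro rfl
    have hD0 : 1 + (A * (L / c) ^ 2 - B * (L / c) ^ 3) ≠ 0 := fun h0 ↦ by simp [h0] at hD
    exact mul_ne_zero (pow_ne_zero 3 hc) hD0 (by rw [← h.prod_y hc, mul_zero])
  have hsum : v (X₁ / y₁ + X₂ / y₂ + X₃ / y₃) ≤ α * ρ := by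
    rw [h.sum_X_div_y hc h₁.ne_zero h₂.ne_zero hy₃, map_div₀, hD, div_one]
    refine valuation_mul_le (v.map_sub_le ?_ ?_)
      (hν.trans (pow_le_of_le_one zero_le hρ three_ne_zero))
    · exact valuation_natCast_mul_le (valuation_mul_le_of_le_one hA hL1) 2
    · exact valuation_natCast_mul_le (valuation_mul_le_of_le_one hB (pow_mem hL1 2)) 3
  have hz₃ : v (X₃ / y₃) ≤ ρ := by
    rw [← add_sub_cancel_left (X₁ / y₁ + X₂ / y₂) (X₃ / y₃)]
    exact v.map_sub_le (hsum.trans (mul_le_of_le_one_left' hα.le))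
      (v.map_add_le h₁.div_le h₂.div_le)
  refine ⟨⟨hy₃, hz₃, ?_⟩, hsum⟩
  have hw₃ : y₃⁻¹ = c⁻¹ - L / c * (X₃ / y₃) := by
    field_simp
    linear_combination -h.y₃_eq
  rw [hw₃]
  exact v.map_sub_le hν ((valuation_mul_le hL hz₃).trans_eq (pow_succ ρ 2).symm)

end IsLineSection

end Valuation

section Curve

variable {F : Type*} [Field F] {W : WeierstrassCurve.Affine F} {s A B : F}

/-- `W` is the curve `y² = (x + s)³ + A (x + s) + B`, a short Weierstrass curve in the coordinate
`X = x + s`. -/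
structure IsDepressed (W : WeierstrassCurve.Affine F) (s A B : F) : Prop where
  a₁_eq : W.a₁ = 0
  a₂_eq : W.a₂ = 3 * s
  a₃_eq : W.a₃ = 0
  a₄_eq : W.a₄ = 3 * s ^ 2 + A
  a₆_eq : W.a₆ = s ^ 3 + A * s + B

lemma IsDepressed.equation_iff (hW : IsDepressed W s A B) (x y : F) :
    W.Equation x y ↔ y ^ 2 = (x + s) ^ 3 + A * (x + s) + B := by
  rw [Affine.equation_iff, hW.a₁_eq, hW.a₂_eq, hW.a₃_eq, hW.a₄_eq, hW.a₆_eq]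
  ring_nf

lemma y_eq_slope_mul_add [DecidableEq F] {x₁ x₂ y₁ y₂ : F} (h₁ : W.Equation x₁ y₁)
    (h₂ : W.Equation x₂ y₂) (hxy : ¬(x₁ = x₂ ∧ y₁ = W.negY x₂ y₂)) :
    y₂ = W.slope x₁ x₂ y₁ y₂ * (x₂ - x₁) + y₁ := by
  by_cases hx : x₁ = x₂
  · rw [hx, sub_self, mul_zero, zero_add]
    exact (Affine.Y_eq_of_Y_ne h₁ h₂ hx fun hy ↦ hxy ⟨hx, hy⟩).symm
  · rw [Affine.slope_of_X_ne hx]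
    have := sub_ne_zero.2 hx
    field_simp
    ring

lemma IsDepressed.isLineSection_slope [DecidableEq F] (hW : IsDepressed W s A B) {x₁ x₂ y₁ y₂ : F}
    (h₁ : W.Equation x₁ y₁) (h₂ : W.Equation x₂ y₂) (hxy : ¬(x₁ = x₂ ∧ y₁ = W.negY x₂ y₂)) :
    IsLineSection A B (W.slope x₁ x₂ y₁ y₂) (y₁ - W.slope x₁ x₂ y₁ y₂ * (x₁ + s))
      (x₁ + s) y₁ (x₂ + s) y₂ (W.addX x₁ x₂ (W.slope x₁ x₂ y₁ y₂) + s)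
      (-W.addY x₁ x₂ y₁ (W.slope x₁ x₂ y₁ y₂)) := by
  have hy₂ := y_eq_slope_mul_add h₁ h₂ hxy
  have hroots := Affine.addPolynomial_slope h₁ h₂ hxy
  rw [Affine.addPolynomial_eq, neg_inj, Cubic.prod_X_sub_C_eq, Cubic.toPoly_injective,
    Cubic.mk.injEq, hW.a₁_eq, hW.a₂_eq, hW.a₃_eq, hW.a₄_eq, hW.a₆_eq] at hroots
  obtain ⟨-, hsum, hsum_mul, hprod⟩ := hroots
  refine ⟨?_, ?_, ?_, by ring, by linear_combination hy₂, ?_⟩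
  · linear_combination hsum
  · linear_combination -hsum_mul + 2 * s * hsum
  · linear_combination hprod - s * hsum_mul + s ^ 2 * hsum
  · rw [Affine.addY, Affine.negAddY, Affine.negY, hW.a₁_eq, hW.a₃_eq]
    ring

/-- The parameter `z = X / y` at infinity, where `X = x + s`; it vanishes at the point at
infinity. -/
def pointParam (s : F) : W.Point → F
  | .zero => 0
  | .some x y _ => (x + s) / y

variable {Γ₀ : Type*} [LinearOrderedCommGroupWithZero Γ₀] {v : Valuation F Γ₀} {α ρ : Γ₀}

/-- The neighbourhood of radius `ρ` of the point at infinity, in the coordinate `X = x + s`; see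
`IsNearInfinity`. -/
def IsNearZero (v : Valuation F Γ₀) (ρ : Γ₀) (s : F) : W.Point → Prop
  | .zero => True
  | .some x y _ => IsNearInfinity v ρ (x + s) y

namespace IsDepressed

lemma isNearInfinity_of_one_le (hW : IsDepressed W s A B) (hα : α < 1) (hA : v A ≤ α)
    (hB : v B ≤ α) {x y : F} (h : W.Equation x y) (hx : 1 ≤ v (x + s)) :
    v ((x + s) / y) ≠ 0 ∧ v ((x + s) / y) ≤ 1 ∧ IsNearInfinity v (v ((x + s) / y)) (x + s) y := by
  rw [hW.equation_iff] at h
  set X := x + s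
  have hX3 : 1 ≤ v X ^ 3 := one_le_pow_of_one_le' hx 3
  have hlow : v (A * X + B) < v (X ^ 3) := by
    rw [v.map_pow]
    refine v.map_add_lt ?_ ((hB.trans_lt hα).trans_le hX3)
    calc v (A * X) < v X := by
          rw [v.map_mul]
          exact mul_lt_of_lt_one_left (zero_lt_one.trans_le hx) (hA.trans_lt hα)
      _ ≤ v X ^ 3 := le_self_pow₀ hx three_ne_zero
  have hy2 : v y ^ 2 = v X ^ 3 := by
    rw [← v.map_pow, h, add_assoc, v.map_add_eq_of_lt_left hlow, v.map_pow]
  have hy1 : 1 ≤ v y := (one_le_pow_iff_of_nonneg zero_le two_ne_zero).1 (hX3.trans_eq hy2.symm)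
  have hy0 : v y ≠ 0 := (zero_lt_one.trans_le hy1).ne'
  have hρ3 : v (X / y) ^ 3 = v y⁻¹ := by
    rw [map_div₀, div_pow, ← hy2, map_inv₀]
    field_simp
  have hρ0 : v (X / y) ≠ 0 := by
    rw [map_div₀]
    exact div_ne_zero (zero_lt_one.trans_le hx).ne' hy0
  refine ⟨hρ0, ?_, v.ne_zero_iff.1 hy0, le_rfl, hρ3.ge⟩
  refine (pow_le_one_iff_of_nonneg zero_le three_ne_zero).1 ?_
  rw [hρ3, map_inv₀]
  exact inv_le_one_of_one_le₀ hy1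

variable [DecidableEq F]

lemma isNearZero_add_and_valuation_le (hW : IsDepressed W s A B) (hα : α < 1) (hA : v A ≤ α)
    (hB : v B ≤ α) (hρ : ρ ≤ 1) {P Q : W.Point} (hP : IsNearZero v ρ s P)
    (hQ : IsNearZero v ρ s Q) :
    IsNearZero v ρ s (P + Q) ∧
      v (pointParam s P + pointParam s Q - pointParam s (P + Q)) ≤ α * ρ := by
  rcases P with _ | ⟨x₁, y₁, h₁⟩
  · rw [← Affine.Point.zero_def, zero_add]
    exact ⟨hQ, by simp [pointParam]⟩
  rcases Q with _ | ⟨x₂, y₂, h₂⟩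
  · rw [← Affine.Point.zero_def, add_zero]
    exact ⟨hP, by simp [pointParam]⟩
  by_cases hxy : x₁ = x₂ ∧ y₁ = W.negY x₂ y₂
  · obtain ⟨rfl, rfl⟩ := hxy
    rw [Affine.Point.add_of_Y_eq rfl rfl]
    refine ⟨trivial, ?_⟩
    simp [pointParam, Affine.negY, hW.a₁_eq, hW.a₃_eq, div_neg]
  · rw [Affine.Point.add_some hxy]
    have hsection := hW.isLineSection_slope h₁.1 h₂.1 hxy
    obtain ⟨hnear, hsum⟩ := hsection.isNearInfinity_and_valuation_sum_le hα hA hB hρ hP hQ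
    rw [div_neg, ← sub_eq_add_neg] at hsum
    have hneg := hnear.neg
    rw [neg_neg] at hneg
    exact ⟨hneg, hsum⟩

lemma isNearZero_nsmul_and_valuation_le (hW : IsDepressed W s A B) (hα : α < 1) (hA : v A ≤ α)
    (hB : v B ≤ α) (hρ : ρ ≤ 1) {P : W.Point} (hP : IsNearZero v ρ s P) (n : ℕ) :
    IsNearZero v ρ s (n • P) ∧ v (n * pointParam s P - pointParam s (n • P)) ≤ α * ρ := by
  induction n with
  | zero =>
    rw [zero_smul]
    exact ⟨trivial, by simp [pointParam]⟩
  | succ n ih =>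
    obtain ⟨hnear, hsum⟩ := hW.isNearZero_add_and_valuation_le hα hA hB hρ ih.1 hP
    rw [succ_nsmul]
    refine ⟨hnear, ?_⟩
    calc v ((n + 1 : ℕ) * pointParam s P - pointParam s (n • P + P))
        = v ((n * pointParam s P - pointParam s (n • P)) +
            (pointParam s (n • P) + pointParam s P - pointParam s (n • P + P))) := by
          congr 1; push_cast; ring
      _ ≤ α * ρ := v.map_add_le ih.2 hsum

lemma valuation_natCast_le_of_nsmul_eq_zero (hW : IsDepressed W s A B) (hα : α < 1) (hA : v A ≤ α)
    (hB : v B ≤ α) {x y : F} (h : W.Nonsingular x y) (hx : 1 ≤ v (x + s)) {n : ℕ}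
    (hn : n • Affine.Point.some x y h = 0) : v n ≤ α := by
  obtain ⟨hρ0, hρ, hnear⟩ := hW.isNearInfinity_of_one_le hα hA hB h.1 hx
  have hle : v (n * pointParam s (.some x y h) - pointParam s (n • .some x y h)) ≤
      α * v ((x + s) / y) :=
    (hW.isNearZero_nsmul_and_valuation_le hα hA hB hρ (P := .some x y h) hnear n).2
  have hzero : pointParam s (0 : W.Point) = 0 := rfl
  rw [hn, hzero, sub_zero, v.map_mul] at hle
  exact le_of_mul_le_mul_right hle (zero_lt_iff.2 hρ0)

end IsDepressed

end Curve

section Doubling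

variable {F : Type*} [Field F] [DecidableEq F] {W : WeierstrassCurve.Affine F}

/-- Evaluate at `e` the identity between `x³ + a₂ x² + a₄ x + a₆ - (L (x - x₁) + y₁)²` and
`(x - x₁) (x - x₂) (x - x₃)`. -/
lemma sub_mul_sub_mul_addX_sub (ha₁ : W.a₁ = 0) (ha₃ : W.a₃ = 0) {e x₁ x₂ y₁ y₂ : F}
    (he : W.Equation e 0) (h₁ : W.Equation x₁ y₁) (h₂ : W.Equation x₂ y₂)
    (hxy : ¬(x₁ = x₂ ∧ y₁ = W.negY x₂ y₂)) :
    (x₁ - e) * (x₂ - e) * (W.addX x₁ x₂ (W.slope x₁ x₂ y₁ y₂) - e) =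
      (W.slope x₁ x₂ y₁ y₂ * (e - x₁) + y₁) ^ 2 := by
  have heval := congr_arg (Polynomial.eval e) (Affine.addPolynomial_slope h₁ h₂ hxy)
  rw [Affine.equation_iff, ha₁, ha₃] at he
  simp only [Affine.addPolynomial_eq, Cubic.toPoly, ha₁, ha₃, Polynomial.eval_neg,
    Polynomial.eval_add, Polynomial.eval_mul, Polynomial.eval_pow, Polynomial.eval_sub,
    Polynomial.eval_C, Polynomial.eval_X] at heval
  linear_combination he - heval

lemma isSquare_sub_of_two_nsmul_eq (ha₁ : W.a₁ = 0) (ha₃ : W.a₃ = 0) {e x y : F}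
    (he : W.Equation e 0) {h : W.Nonsingular x y} {P : W.Point} (hP : 2 • P = .some x y h) :
    IsSquare (x - e) := by
  rcases P with _ | ⟨x₁, y₁, h₁⟩
  · rw [← Affine.Point.zero_def, smul_zero] at hP
    exact absurd hP.symm (Affine.Point.some_ne_zero h)
  rw [two_nsmul] at hP
  have hy : ¬(x₁ = x₁ ∧ y₁ = W.negY x₁ y₁) := fun hy ↦
    Affine.Point.some_ne_zero h (hP.symm.trans (Affine.Point.add_of_Y_eq hy.1 hy.2))
  have hx₁ : x₁ - e ≠ 0 := by
    intro hx₁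
    obtain rfl := sub_eq_zero.1 hx₁
    have hy₁ := (Affine.equation_iff ..).1 h₁.1
    have hy₁ : y₁ ^ 2 = 0 := by
      rw [Affine.equation_iff, ha₁, ha₃] at he
      rw [ha₁, ha₃] at hy₁
      linear_combination hy₁ - he
    refine hy ⟨rfl, ?_⟩
    rw [Affine.negY, ha₁, ha₃, pow_eq_zero_iff two_ne_zero |>.1 hy₁]
    ring
  rw [Affine.Point.add_some hy, Affine.Point.some.injEq] at hP
  rw [← hP.1]
  refine ⟨(W.slope x₁ x₁ y₁ y₁ * (e - x₁) + y₁) / (x₁ - e), ?_⟩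
  have := sub_mul_sub_mul_addX_sub ha₁ ha₃ he h₁.1 h₁.1 hy
  field_simp
  linear_combination this

end Doubling

section Descent

open WithZero

/-- The curve `y² = x (x + a) (x - b)`. -/
abbrev splitCurve {F : Type*} [Field F] (a b : F) : WeierstrassCurve.Affine F :=
  { a₁ := 0, a₂ := a - b, a₃ := 0, a₄ := -(a * b), a₆ := 0 }

lemma isDepressed_splitCurve {F : Type*} [Field F] (h3 : (3 : F) ≠ 0) (a b : F) :
    IsDepressed (splitCurve a b) ((a - b) / 3) (-(a * b) - 3 * ((a - b) / 3) ^ 2)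
      (a * b * ((a - b) / 3) + 2 * ((a - b) / 3) ^ 3) where
  a₁_eq := rfl
  a₂_eq := (mul_div_cancel₀ _ h3).symm
  a₃_eq := rfl
  a₄_eq := by ring
  a₆_eq := by ring

lemma lt_valuation_of_isSquare {F Γ₀ : Type*} [Field F] [LinearOrderedCommGroupWithZero Γ₀]
    {v : Valuation F Γ₀} {a x : F} (ha : ¬IsSquare (v a)) (hx : IsSquare x)
    (hxa : IsSquare (x + a)) : v a < v x := by
  refine lt_of_le_of_ne (not_lt.1 fun hlt ↦ ha ?_) fun heq ↦ ha (heq ▸ hx.map v)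
  rw [← v.map_add_eq_of_lt_right hlt]
  exact hxa.map v

lemma not_isSquare_exp_neg_one : ¬IsSquare (exp (-1) : ℤᵐ⁰) := by
  rintro ⟨γ, hγ⟩
  have hγ0 : γ ≠ 0 := by
    rintro rfl
    simp at hγ
  have hlog := congr_arg log hγ
  rw [log_exp, log_mul hγ0 hγ0] at hlog
  lia

lemma one_le_of_exp_neg_one_lt {γ : ℤᵐ⁰} (hγ : exp (-1) < γ) : 1 ≤ γ := by
  have hγ0 : γ ≠ 0 := (zero_le.trans_lt hγ).ne'
  rw [← lt_log_iff_exp_lt hγ0] at hγ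
  rw [← exp_zero, ← le_log_iff_exp_le hγ0]
  lia

variable {F : Type*} [Field F] [DecidableEq F] {v : Valuation F ℤᵐ⁰} {a b : F}

lemma one_le_valuation_of_two_nsmul_eq (hab : v a = exp (-1) ∨ v b = exp (-1))
    {P : (splitCurve a b).Point} {x y : F} {h : (splitCurve a b).Nonsingular x y}
    (hP : 2 • P = .some x y h) : 1 ≤ v x := by
  have hsq {e : F} (he : e * (e + a) * (e - b) = 0) : IsSquare (x - e) :=
    isSquare_sub_of_two_nsmul_eq rfl rfl
      ((Affine.equation_iff ..).2 (by linear_combination -he)) hP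
  have hx : IsSquare x := by simpa using hsq (e := 0) (by ring)
  refine one_le_of_exp_neg_one_lt ?_
  rcases hab with ha | hb
  · have hxa : IsSquare (x + a) := by simpa using hsq (e := -a) (by ring)
    rw [← ha]
    exact lt_valuation_of_isSquare (ha ▸ not_isSquare_exp_neg_one) hx hxa
  · have hxb : IsSquare (x + -b) := by simpa [sub_eq_add_neg] using hsq (e := b) (by ring)
    rw [← v.map_neg] at hb
    rw [← hb]
    exact lt_valuation_of_isSquare (hb ▸ not_isSquare_exp_neg_one) hx hxb

lemma valuation_natCast_le_of_nsmul_two_nsmul_eq_zero (h3 : v 3 = 1) (ha : v a ≤ exp (-1))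
    (hb : v b ≤ exp (-1)) (hab : v a = exp (-1) ∨ v b = exp (-1)) {P : (splitCurve a b).Point}
    (hP : 2 • P ≠ 0) {n : ℕ} (hn : n • 2 • P = 0) : v n ≤ exp (-1) ^ 2 := by
  have h30 : (3 : F) ≠ 0 := v.ne_zero_iff.1 (h3 ▸ one_ne_zero)
  have hexp : (exp (-1) : ℤᵐ⁰) < 1 := by rw [← exp_zero, exp_lt_exp]; lia
  have hs : v ((a - b) / 3) ≤ exp (-1) := by
    rw [map_div₀, h3, div_one]
    exact v.map_sub_le ha hb
  have hs2 := valuation_pow_le hs 2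
  have hab2 : v (a * b) ≤ exp (-1) ^ 2 := (valuation_mul_le ha hb).trans_eq (sq _).symm
  have hA : v (-(a * b) - 3 * ((a - b) / 3) ^ 2) ≤ exp (-1) ^ 2 :=
    v.map_sub_le (by rwa [v.map_neg]) (valuation_natCast_mul_le hs2 3)
  have hB : v (a * b * ((a - b) / 3) + 2 * ((a - b) / 3) ^ 3) ≤ exp (-1) ^ 2 :=
    v.map_add_le (valuation_mul_le_of_le_one hab2 (hs.trans hexp.le)) <|
      valuation_natCast_mul_le ((valuation_pow_le hs 3).trans
        (pow_le_pow_right_of_le_one' hexp.le (by norm_num))) 2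
  rcases h2P : 2 • P with _ | ⟨x, y, h⟩
  · exact absurd h2P hP
  have hx : 1 ≤ v x := one_le_valuation_of_two_nsmul_eq hab h2P
  have hxs : 1 ≤ v (x + (a - b) / 3) := by
    rwa [v.map_add_eq_of_lt_left (hs.trans_lt (hexp.trans_le hx))]
  rw [h2P] at hn
  exact (isDepressed_splitCurve h30 a b).valuation_natCast_le_of_nsmul_eq_zero
    (pow_lt_one₀ zero_le hexp two_ne_zero) hA hB h hxs hn

end Descent

lemma exists_addOrderOf_nsmul_eq_prime {G : Type*} [AddMonoid G] {x : G} (hx : IsOfFinAddOrder x)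
    (hx0 : x ≠ 0) : ∃ l m : ℕ, l.Prime ∧ addOrderOf (m • x) = l := by
  have h1 : addOrderOf x ≠ 1 := fun h ↦ hx0 (AddMonoid.addOrderOf_eq_one_iff.1 h)
  obtain ⟨l, hl, hlx⟩ := Nat.exists_prime_and_dvd h1
  exact ⟨l, addOrderOf x / l, hl, addOrderOf_nsmul_addOrderOf_sub hx.addOrderOf_pos.ne' hlx⟩

lemma exists_prime_dvd_not_dvd {k m : ℕ} (hk : Squarefree k) (hkm : ¬k ∣ m) :
    ∃ r : ℕ, r.Prime ∧ r ∣ k ∧ ¬r ∣ m := by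
  contrapose! hkm
  rw [← Nat.prod_primeFactors_of_squarefree hk]
  exact Finset.prod_primes_dvd m (fun r hr ↦ (Nat.prime_of_mem_primeFactors hr).prime) fun r hr ↦
    hkm r (Nat.prime_of_mem_primeFactors hr) (Nat.dvd_of_mem_primeFactors hr)

lemma not_sq_dvd_mul_and_sq_dvd_mul {p q k r : ℕ} (hpq : p.Coprime q) (hk : Squarefree k)
    (hr : r ≠ 1) : ¬(r ^ 2 ∣ p * k ∧ r ^ 2 ∣ q * k) := by
  rintro ⟨hp, hq⟩
  have hdvd := Nat.dvd_gcd hp hq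
  rw [Nat.gcd_mul_right, hpq, one_mul, sq] at hdvd
  exact hr (Nat.isUnit_iff.1 (hk r hdvd))

section Rational

open WithZero

variable {r : ℕ} [Fact r.Prime]

lemma padicValuation_intCast_le_exp_pow_iff {a : ℤ} {n : ℕ} :
    Rat.padicValuation r a ≤ exp (-1) ^ n ↔ (r : ℤ) ^ n ∣ a := by
  rw [padicValInt_dvd_iff, ← exp_nsmul]
  rcases eq_or_ne a 0 with rfl | ha
  · simp
  · have hval : Rat.padicValuation r a = exp (-(padicValInt r a : ℤ)) := by
      simp [Rat.padicValuation, ha]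
    rw [hval, exp_le_exp, nsmul_eq_mul]
    simp only [ha, false_or]
    lia

lemma padicValuation_intCast_le_exp_neg_one_iff {a : ℤ} :
    Rat.padicValuation r a ≤ exp (-1) ↔ (r : ℤ) ∣ a := by
  simpa only [pow_one] using padicValuation_intCast_le_exp_pow_iff (n := 1)

lemma padicValuation_intCast_eq_exp_neg_one {a : ℤ} (ha : (r : ℤ) ∣ a) (ha2 : ¬(r : ℤ) ^ 2 ∣ a) :
    Rat.padicValuation r a = exp (-1) := by
  refine (padicValuation_intCast_le_exp_neg_one_iff.2 ha).antisymm ?_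
  rw [← padicValuation_intCast_le_exp_pow_iff, not_le, ← exp_nsmul] at ha2
  have hlog := lt_log_of_exp_lt ha2
  rw [← le_log_iff_exp_le (exp_pos.trans ha2).ne']
  simp only [smul_neg, nsmul_eq_mul] at hlog
  lia

lemma sq_dvd_of_nsmul_two_nsmul_eq_zero (hr3 : r ≠ 3) {a b : ℤ}
    (ha : (r : ℤ) ∣ a) (hb : (r : ℤ) ∣ b) (hab : ¬((r : ℤ) ^ 2 ∣ a ∧ (r : ℤ) ^ 2 ∣ b))
    {P : (splitCurve (a : ℚ) b).Point} (hP : 2 • P ≠ 0) {n : ℕ} (hn : n • 2 • P = 0) :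
    r ^ 2 ∣ n := by
  have h3 : Rat.padicValuation r (3 : ℤ) = 1 := by
    rw [Rat.padicValuation_cast, Int.padicValuation_eq_one_iff]
    exact_mod_cast (Nat.prime_dvd_prime_iff_eq Fact.out Nat.prime_three).not.2 hr3
  have hval := valuation_natCast_le_of_nsmul_two_nsmul_eq_zero (mod_cast h3)
    (padicValuation_intCast_le_exp_neg_one_iff.2 ha)
    (padicValuation_intCast_le_exp_neg_one_iff.2 hb)
    ((not_and_or.1 hab).imp (padicValuation_intCast_eq_exp_neg_one ha)
      (padicValuation_intCast_eq_exp_neg_one hb)) hP hn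
  rw [← Int.cast_natCast, padicValuation_intCast_le_exp_pow_iff] at hval
  exact_mod_cast hval

end Rational

theorem torsion_is_two_torsion_general {r : ℕ} (hr : r.Prime) (hr3 : r ≠ 3) {a b : ℤ}
    (ha : (r : ℤ) ∣ a) (hb : (r : ℤ) ∣ b) (hab : ¬((r : ℤ) ^ 2 ∣ a ∧ (r : ℤ) ^ 2 ∣ b))
    {P : (splitCurve (a : ℚ) b).Point} (hP : IsOfFinAddOrder P) : 2 • P = 0 := by
  have : Fact r.Prime := ⟨hr⟩
  by_contra h2P
  have h2Pfin : IsOfFinAddOrder (2 • P) := hP.nsmul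
  obtain ⟨l, m, hl, hlm⟩ := exists_addOrderOf_nsmul_eq_prime h2Pfin h2P
  rw [smul_comm m 2 P] at hlm
  have hne : 2 • m • P ≠ 0 := by
    rw [Ne, ← AddMonoid.addOrderOf_eq_one_iff, hlm]
    exact hl.ne_one
  have hsq : r ^ 2 ∣ l := sq_dvd_of_nsmul_two_nsmul_eq_zero hr3 ha hb hab hne
    (hlm ▸ addOrderOf_nsmul_eq_zero _)
  exact hr.ne_one (Nat.isUnit_iff.1 (hl.prime.irreducible.squarefree r (sq r ▸ hsq)))

/-- For coprime positive integers `p, q` and a squarefree positive integer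
`k ∉ {1, 2, 3, 6}`, every rational torsion point of the elliptic curve
`y² = x(x+pk)(x−qk)` is a 2-torsion point. -/
theorem torsion_is_two_torsion (p q k : ℕ) (hp : 0 < p) (hq : 0 < q)
    (hpq : Nat.Coprime p q) (hk : 0 < k) (hksf : Squarefree k)
    (hk1 : k ≠ 1) (hk2 : k ≠ 2) (hk3 : k ≠ 3) (hk6 : k ≠ 6)
    (W : WeierstrassCurve.Affine ℚ)
    (hW : W = { a₁ := 0, a₂ := (p : ℚ) * k - (q : ℚ) * k, a₃ := 0,
                a₄ := -((p : ℚ) * k * ((q : ℚ) * k)), a₆ := 0 })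
    (P : W.Point) (hP : ∃ n : ℕ, 0 < n ∧ n • P = 0) :
    2 • P = 0 := by
  have hk13 : ¬k ∣ 3 := by simp [Nat.dvd_prime Nat.prime_three, hk1, hk3]
  obtain ⟨r, hr, hrk, hr3⟩ := exists_prime_dvd_not_dvd hksf hk13
  have hW' : W = splitCurve (((p * k : ℕ) : ℤ) : ℚ) ((q * k : ℕ) : ℤ) := by
    rw [hW]; push_cast; rfl
  subst hW'
  exact torsion_is_two_torsion_general hr (fun h ↦ hr3 h.dvd)
    (mod_cast hrk.mul_left p) (mod_cast hrk.mul_left q)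
    (mod_cast not_sq_dvd_mul_and_sq_dvd_mul hpq hksf hr.ne_one)
    (isOfFinAddOrder_iff_nsmul_eq_zero.2 hP)
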